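/- Let V be a finite-dimensional complex inner product space and K a ℤ[ω]-submodule of V that spans V over ℂ and satisfies ⟨x,y⟩ ∈ pℤ[ω] for all x,y ∈ K. Let Φ ⊆ K be a set of vectors of norm 3 that generates K as a ℤ[ω]-module. For r ∈ Φ the ω-reflection φ_r maps K onto K; let G be the subgroup of the unitary group of V generated by {φ_r : r ∈ Φ}, so G acts on K by ℤ[ω]-linear isometries. For r ∈ Φ and m ∈ ℤ[ω], define the ℤ[ω]-linear automorphism ψ_{r,m} of K ⊕ ℤ[ω] by ψ_{r,m}(y,n) = (φ_r(y), n − m·p⁻¹⟨r,y⟩) (note p⁻¹⟨r,y⟩ ∈ ℤ[ω]), and let G̃ be the subgroup of the group of ℤ[ω]-module automorphisms of K ⊕ ℤ[ω] generated by all ψ_{r,m}. Then the map from the semidirect product K ⋊ G (with G acting on K by restriction, product (x,g)(y,h) = (x+gy, gh)) to G̃ sending (x,g) to the automorphism (y,n) ↦ (g·y, n − p⁻¹⟨x, g·y⟩) is a group isomorphism; in particular the affine reflection group G̃ is isomorphic to K ⋊ G. -/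

import Mathlib

/- The affine reflection group G̃ associated to an Eisenstein root system Φ
   spanning a lattice K (with all inner products in pℤ[ω]) is isomorphic to
   the semidirect product K ⋊ G:  the map sending (x, g) to the automorphism
   (y, n) ↦ (g·y, n − p⁻¹⟨x, g·y⟩) of K ⊕ ℤ[ω] is a group isomorphism onto
   the subgroup G̃ generated by the ψ_{r,m}. -/

open scoped ComplexInnerProductSpace

set_option synthInstance.maxHeartbeats 2000000
set_option maxHeartbeats 2000000

/-- `ω = e^{2πi/3}`. -/
noncomputable def ω : ℂ := Complex.exp (2 * Real.pi * Complex.I / 3)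

/-- `p = 1 - ω̄`. -/
noncomputable def p : ℂ := 1 - starRingEnd ℂ ω

/-- The ring of Eisenstein integers `ℤ[ω]`, as a subring of `ℂ`. -/
noncomputable def Eis : Subring ℂ := Subring.closure {ω}

theorem omega_cube : ω ^ 3 = 1 := by
  unfold ω
  rw [← Complex.exp_nat_mul]
  rw [Complex.exp_eq_one_iff]
  exact ⟨1, by push_cast; ring⟩

theorem omega_ne : ω ≠ 1 := by
  unfold ω
  intro h
  rw [Complex.exp_eq_one_iff] at h
  obtain ⟨n, hn⟩ := h
  have h2 : (2 * Real.pi * Complex.I : ℂ) ≠ 0 := Complex.two_pi_I_ne_zero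
  have h3 : (2 * Real.pi * Complex.I : ℂ) * (1 - 3 * n) = 0 := by linear_combination 3 * hn
  have h4 : (1 - 3 * (n:ℂ)) = 0 := (mul_eq_zero.mp h3).resolve_left h2
  have h5 : (1 - 3 * n : ℤ) = 0 := by exact_mod_cast h4
  omega

theorem omega_conj : starRingEnd ℂ ω = ω ^ 2 := by
  have h1 : starRingEnd ℂ ω * ω = 1 := by
    unfold ω
    rw [← Complex.exp_conj, ← Complex.exp_add]
    have h2 : starRingEnd ℂ (2 * Real.pi * Complex.I / 3) = -(2 * Real.pi * Complex.I / 3) := by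
      rw [show (2 : ℂ) = ((2 : ℝ) : ℂ) by norm_num, show (3 : ℂ) = ((3 : ℝ) : ℂ) by norm_num]
      simp only [map_div₀, map_mul, Complex.conj_ofReal, Complex.conj_I]
      ring
    rw [h2]
    simp
  have h := omega_cube
  linear_combination (ω ^ 2) * h1 - (starRingEnd ℂ ω) * h

theorem p_ne : p ≠ 0 := by
  unfold p
  intro h
  apply omega_ne
  have h1 : starRingEnd ℂ ω = 1 := by linear_combination -h
  have := congrArg (starRingEnd ℂ) h1
  simpa using this

theorem omega_mem : ω ∈ Eis := Subring.subset_closure rfl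

theorem conj_mem {a : ℂ} (ha : a ∈ Eis) : starRingEnd ℂ a ∈ Eis := by
  have : Eis ≤ Eis.comap (starRingEnd ℂ) := by
    refine (Subring.closure_le).2 ?_
    rintro x rfl
    change starRingEnd ℂ ω ∈ Eis
    rw [omega_conj]
    exact pow_mem omega_mem 2
  exact this ha

theorem affine_reflection_group_iso_semidirect
    {V : Type*} [NormedAddCommGroup V] [InnerProductSpace ℂ V] [FiniteDimensional ℂ V]
    (K : Submodule Eis V)
    (hspan : Submodule.span ℂ (K : Set V) = ⊤)
    (hKp : ∀ x ∈ K, ∀ y ∈ K, ∃ a ∈ Eis, ⟪x, y⟫ = p * a)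
    (Φ : Set V) (hΦK : Φ ⊆ (K : Set V)) (hΦ3 : ∀ r ∈ Φ, ⟪r, r⟫ = 3)
    (hΦgen : Submodule.span Eis Φ = K)
    -- the ω-reflections in the roots, as unitary automorphisms of V
    (φ : V → (V ≃ₗᵢ[ℂ] V))
    (hφ : ∀ r ∈ Φ, ∀ y : V, φ r y = y - ((1 - ω) * (⟪r, y⟫ / ⟪r, r⟫)) • r)
    -- G is the subgroup of the unitary group of V generated by the reflections
    (G : Subgroup (V ≃ₗᵢ[ℂ] V))
    (hG : G = Subgroup.closure {g | ∃ r ∈ Φ, g = φ r})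
    -- G maps K onto itself, so it acts on K by ℤ[ω]-linear isometries
    (hGK : ∀ g ∈ G, ∀ y ∈ K, g y ∈ K)
    -- the generating affine reflections ψ_{r,m} of K ⊕ ℤ[ω]
    (ψ : V → Eis → ((K × Eis) ≃ₗ[Eis] (K × Eis)))
    (hψ : ∀ r ∈ Φ, ∀ (m : Eis) (y : K) (n : Eis),
      (((ψ r m) (y, n)).1 : V) = φ r (y : V) ∧
      ((((ψ r m) (y, n)).2 : ℂ) = (n : ℂ) - (m : ℂ) * (p⁻¹ * ⟪r, (y : V)⟫)))
    -- the affine reflection group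
    (Gt : Subgroup ((K × Eis) ≃ₗ[Eis] (K × Eis)))
    (hGt : Gt = Subgroup.closure {g | ∃ r ∈ Φ, ∃ m : Eis, g = ψ r m}) :
    -- note that p⁻¹⟨r,y⟩ ∈ ℤ[ω] :
    (∀ r ∈ Φ, ∀ y ∈ K, p⁻¹ * ⟪r, y⟫ ∈ Eis) ∧
    -- the map from the semidirect product K ⋊ G onto G̃ is a group isomorphism
    ∃ F : K × G → Gt,
      Function.Bijective F ∧
      (∀ (x y : K) (g h : G),
        F (x, g) * F (y, h) =
          F (x + ⟨g.1 (y : V), hGK g.1 g.2 (y : V) y.2⟩, g * h)) ∧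
      (∀ (x : K) (g : G) (y : K) (n : Eis),
        ((((F (x, g) : (K × Eis) ≃ₗ[Eis] (K × Eis)) (y, n)).1 : V) = g.1 (y : V)) ∧
        ((((F (x, g) : (K × Eis) ≃ₗ[Eis] (K × Eis)) (y, n)).2 : ℂ) =
          (n : ℂ) - p⁻¹ * ⟪(x : V), g.1 (y : V)⟫)) := by
  have hdiv : ∀ x ∈ K, ∀ y ∈ K, p⁻¹ * ⟪x, y⟫ ∈ Eis := by
    intro x hx y hy
    obtain ⟨a, ha, h⟩ := hKp x hx y hy
    rw [h, inv_mul_cancel_left₀ p_ne]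
    exact ha
  refine ⟨fun r hr y hy => hdiv r (hΦK hr) y hy, ?_⟩
  have hext : ∀ e f : (K × Eis) →ₗ[Eis] (K × Eis),
      (∀ (y : K) (n : Eis), ((e (y, n)).1 : V) = ((f (y, n)).1 : V) ∧
        ((e (y, n)).2 : ℂ) = ((f (y, n)).2 : ℂ)) → e = f := by
    intro e f h
    refine LinearMap.ext ?_
    rintro ⟨y, n⟩
    exact Prod.ext (Subtype.ext (h y n).1) (Subtype.ext (h y n).2)
  have hlin : ∀ (x : K) (g : G), ∃ e : (K × Eis) →ₗ[Eis] (K × Eis), ∀ (y : K) (n : Eis),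
      ((e (y, n)).1 : V) = g.1 (y : V) ∧
      ((e (y, n)).2 : ℂ) = (n : ℂ) - p⁻¹ * ⟪(x : V), g.1 (y : V)⟫ := by
    intro x g
    refine ⟨{ toFun := fun q => (⟨g.1 (q.1 : V), hGK g.1 g.2 _ q.1.2⟩,
                q.2 - ⟨p⁻¹ * ⟪(x : V), g.1 (q.1 : V)⟫, hdiv _ x.2 _ (hGK g.1 g.2 _ q.1.2)⟩)
              map_add' := ?_
              map_smul' := ?_ }, ?_⟩
    · rintro ⟨a, m⟩ ⟨b, n⟩
      refine Prod.ext (Subtype.ext ?_) (Subtype.ext ?_)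
      · simp
      · simp [inner_add_right]
        ring
    · rintro c ⟨b, n⟩
      refine Prod.ext (Subtype.ext ?_) (Subtype.ext ?_)
      · simp [Subring.smul_def]
      · simp [Subring.smul_def, inner_smul_right]
        ring
    · intro y n
      simp
  choose L hL using hlin
  have hLmul : ∀ (x y : K) (g h : G), (L x g) ∘ₗ (L y h) =
      L (x + ⟨g.1 (y : V), hGK g.1 g.2 (y : V) y.2⟩) (g * h) := by
    intro x y g h
    apply hext
    intro z n
    have h1 : L y h (z, n) = ((L y h (z, n)).1, (L y h (z, n)).2) := rfl
    rw [LinearMap.comp_apply, h1, (hL _ _ _ _).1, (hL _ _ _ _).1, (hL _ _ _ _).2, (hL _ _ _ _).2,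
      (hL _ _ _ _).1, (hL _ _ _ _).2]
    refine ⟨rfl, ?_⟩
    have h2 : ((g * h : G).1 (z : V)) = g.1 (h.1 (z : V)) := rfl
    rw [h2, Submodule.coe_add, inner_add_left]
    simp only [LinearIsometryEquiv.inner_map_map, (hL _ _ _ _).1]
    ring
  have hL1 : ∀ (x : K) (g : G), x = 0 → g = 1 → L x g = LinearMap.id := by
    rintro x g rfl rfl
    apply hext
    intro z n
    rw [(hL _ _ _ _).1, (hL _ _ _ _).2]
    simp
  have hequiv : ∀ (x : K) (g : G), ∃ e : (K × Eis) ≃ₗ[Eis] (K × Eis), e.toLinearMap = L x g := by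
    intro x g
    refine ⟨LinearEquiv.ofLinearMap (L x g)
      (L (-⟨(g⁻¹).1 (x : V), hGK _ (g⁻¹).2 (x : V) x.2⟩) g⁻¹) ?_ ?_, ?_⟩
    · rw [hLmul]
      apply hL1
      · apply Subtype.ext
        have : g.1 ((g⁻¹).1 (x : V)) = x := g.1.apply_symm_apply (x : V)
        simp only [Submodule.coe_add, Submodule.coe_neg, map_neg, this]
        simp
      · simp
    · rw [hLmul]
      apply hL1
      · simp
      · simp
    · rfl
  choose T hT using hequiv
  have hTa : ∀ (x : K) (g : G) (y : K) (n : Eis),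
      ((T x g (y, n)).1 : V) = g.1 (y : V) ∧
      ((T x g (y, n)).2 : ℂ) = (n : ℂ) - p⁻¹ * ⟪(x : V), g.1 (y : V)⟫ := by
    intro x g y n
    have : T x g (y, n) = L x g (y, n) := by rw [← hT]; rfl
    rw [this]
    exact hL x g y n
  have hTmul : ∀ (x y : K) (g h : G), (T x g) * (T y h) =
      T (x + ⟨g.1 (y : V), hGK g.1 g.2 (y : V) y.2⟩) (g * h) := by
    intro x y g h
    apply LinearEquiv.toLinearMap_injective
    rw [hT, ← hLmul, ← hT, ← hT]
    rfl
  have hT1 : T 0 1 = 1 := by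
    apply LinearEquiv.toLinearMap_injective
    rw [hT, hL1 _ _ rfl rfl]
    rfl
  have hφG : ∀ r ∈ Φ, φ r ∈ G := by
    intro r hr
    rw [hG]
    exact Subgroup.subset_closure ⟨r, hr, rfl⟩
  have hφr : ∀ r ∈ Φ, φ r r = ω • r := by
    intro r hr
    rw [hφ r hr, hΦ3 r hr, div_self (by norm_num), mul_one, sub_smul, one_smul, sub_sub_cancel]
  have hψT : ∀ (r : V) (hr : r ∈ Φ) (m : Eis),
      ψ r m = T ((⟨starRingEnd ℂ m * ω, mul_mem (conj_mem m.2) omega_mem⟩ : Eis) •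
        (⟨r, hΦK hr⟩ : K)) ⟨φ r, hφG r hr⟩ := by
    intro r hr m
    apply LinearEquiv.toLinearMap_injective
    apply hext
    intro y n
    simp only [LinearEquiv.coe_coe]
    rw [(hψ r hr m y n).1, (hψ r hr m y n).2, (hTa _ _ _ _).1, (hTa _ _ _ _).2]
    refine ⟨rfl, ?_⟩
    have h1 : (((⟨starRingEnd ℂ m * ω, mul_mem (conj_mem m.2) omega_mem⟩ : Eis) •
        (⟨r, hΦK hr⟩ : K) : K) : V) = (starRingEnd ℂ (m : ℂ)) • φ r r := by
      rw [hφr r hr, smul_smul]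
      rfl
    rw [h1, inner_smul_left, LinearIsometryEquiv.inner_map_map, Complex.conj_conj]
    ring
  have hψGt : ∀ r ∈ Φ, ∀ m, ψ r m ∈ Gt := by
    intro r hr m
    rw [hGt]
    exact Subgroup.subset_closure ⟨r, hr, m, rfl⟩
  have hadd : ∀ (x : K) (g : G), T x 1 * T 0 g = T x g := by
    intro x g
    rw [hTmul]
    congr 1
    apply Subtype.ext
    simp
  have hadd1 : ∀ (x y : K), T x 1 * T y 1 = T (x + y) 1 := by
    intro x y
    rw [hTmul]
    congr 1
  have hmul0 : ∀ (g h : G), T 0 g * T 0 h = T 0 (g * h) := by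
    intro g h
    rw [hTmul]
    have h0 : (0 : K) + ⟨g.1 ((0 : K) : V), hGK g.1 g.2 _ (0 : K).2⟩ = 0 := by
      apply Subtype.ext
      simp
    rw [h0]
  have hTφ : ∀ (r : V) (hr : r ∈ Φ), T 0 ⟨φ r, hφG r hr⟩ ∈ Gt := by
    intro r hr
    have h := hψT r hr 0
    have h0 : (⟨starRingEnd ℂ ((0 : Eis) : ℂ) * ω, mul_mem (conj_mem (0 : Eis).2) omega_mem⟩ : Eis)
        = 0 := by
      apply Subtype.ext
      simp
    rw [h0, zero_smul] at h
    rw [← h]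
    exact hψGt r hr 0
  have hT0 : ∀ g : G, T 0 g ∈ Gt := by
    have key : ∀ (g : V ≃ₗᵢ[ℂ] V) (_ : g ∈ Subgroup.closure {g | ∃ r ∈ Φ, g = φ r}),
        ∀ hg : g ∈ G, T 0 ⟨g, hg⟩ ∈ Gt := by
      intro g hg
      induction hg using Subgroup.closure_induction with
      | mem x hx =>
        obtain ⟨r, hr, rfl⟩ := hx
        intro _
        exact hTφ r hr
      | one =>
        intro _
        have : T 0 1 ∈ Gt := hT1 ▸ one_mem Gt
        exact this
      | mul x y hx hy ihx ihy =>
        intro hg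
        have h1 : x ∈ G := hG ▸ hx
        have h2 : y ∈ G := hG ▸ hy
        have := mul_mem (ihx h1) (ihy h2)
        rw [hmul0] at this
        exact this
      | inv x hx ihx =>
        intro hg
        have h1 : x ∈ G := hG ▸ hx
        have h2 : T 0 ⟨x⁻¹, hg⟩ = (T 0 ⟨x, h1⟩)⁻¹ := by
          rw [eq_inv_iff_mul_eq_one, hmul0, ← hT1]
          congr 1
          apply Subtype.ext
          simp
        rw [h2]
        exact inv_mem (ihx h1)
    intro g
    exact key g.1 (hG ▸ g.2) g.2
  have hTr : ∀ (r : V) (hr : r ∈ Φ) (a : Eis), T (a • (⟨r, hΦK hr⟩ : K)) 1 ∈ Gt := by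
    intro r hr a
    have hm : starRingEnd ℂ ((a : ℂ) * ω ^ 2) ∈ Eis :=
      conj_mem (mul_mem a.2 (pow_mem omega_mem 2))
    have h := hψT r hr ⟨_, hm⟩
    have h0 : (⟨starRingEnd ℂ (((⟨_, hm⟩ : Eis)) : ℂ) * ω,
        mul_mem (conj_mem (⟨_, hm⟩ : Eis).2) omega_mem⟩ : Eis) = a := by
      apply Subtype.ext
      simp only [Complex.conj_conj]
      linear_combination (a : ℂ) * omega_cube
    rw [h0, ← hadd] at h
    rw [eq_mul_inv_of_mul_eq h.symm]
    exact mul_mem (hψGt r hr _) (inv_mem (hT0 _))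
  have hTx : ∀ x : K, T x 1 ∈ Gt := by
    have key : ∀ (x : V) (_ : x ∈ Submodule.span Eis Φ), ∀ (a : Eis) (hx : x ∈ K),
        T (a • (⟨x, hx⟩ : K)) 1 ∈ Gt := by
      intro x hx
      induction hx using Submodule.span_induction with
      | mem x hx => intro a _; exact hTr x hx a
      | zero =>
        intro a h
        have : a • (⟨0, h⟩ : K) = 0 := by
          apply Subtype.ext
          simp
        rw [this, hT1]
        exact one_mem _
      | add x y hx hy ihx ihy =>
        intro a h
        have h1 : x ∈ K := hΦgen ▸ hx
        have h2 : y ∈ K := hΦgen ▸ hy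
        have h3 : a • (⟨x + y, h⟩ : K) = a • (⟨x, h1⟩ : K) + a • (⟨y, h2⟩ : K) := by
          apply Subtype.ext
          simp
        rw [h3, ← hadd1]
        exact mul_mem (ihx a h1) (ihy a h2)
      | smul c x hx ihx =>
        intro a h
        have h1 : x ∈ K := hΦgen ▸ hx
        have h3 : a • (⟨c • x, h⟩ : K) = (a * c) • (⟨x, h1⟩ : K) := by
          apply Subtype.ext
          simp [mul_smul]
        rw [h3]
        exact ihx _ h1
    intro x
    have := key x.1 (hΦgen.symm ▸ x.2) 1 x.2
    rwa [one_smul] at this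
  have hTmem : ∀ (x : K) (g : G), T x g ∈ Gt := by
    intro x g
    rw [← hadd]
    exact mul_mem (hTx x) (hT0 g)
  have hsurj : ∀ e ∈ Gt, ∃ (x : K) (g : G), T x g = e := by
    intro e he
    rw [hGt] at he
    induction he using Subgroup.closure_induction with
    | mem e he =>
      obtain ⟨r, hr, m, rfl⟩ := he
      exact ⟨_, _, (hψT r hr m).symm⟩
    | one => exact ⟨0, 1, hT1⟩
    | mul a b _ _ iha ihb =>
      obtain ⟨x, g, rfl⟩ := iha
      obtain ⟨y, h, rfl⟩ := ihb
      exact ⟨_, _, (hTmul x y g h).symm⟩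
    | inv a _ iha =>
      obtain ⟨x, g, rfl⟩ := iha
      refine ⟨-⟨(g⁻¹).1 (x : V), hGK _ (g⁻¹).2 (x : V) x.2⟩, g⁻¹, ?_⟩
      rw [eq_inv_iff_mul_eq_one, hTmul, ← hT1]
      congr 1
      · simp
      · simp
  refine ⟨fun q => ⟨T q.1 q.2, hTmem q.1 q.2⟩, ⟨?_, ?_⟩, ?_, ?_⟩
  · rintro ⟨x, g⟩ ⟨y, h⟩ hxy
    have hxy' : T x g = T y h := congrArg Subtype.val hxy
    have hgh : g = h := by
      apply Subtype.ext
      have h1 : (g.1.toLinearEquiv.toLinearMap) = (h.1.toLinearEquiv.toLinearMap) := by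
        apply LinearMap.ext_on hspan
        intro z hz
        have h2 := (hTa x g ⟨z, hz⟩ 0).1
        rw [hxy', (hTa y h ⟨z, hz⟩ 0).1] at h2
        exact h2.symm
      ext z
      exact LinearMap.congr_fun h1 z
    subst hgh
    have hz : (g⁻¹).1 ((x - y : K) : V) ∈ K := hGK _ (g⁻¹).2 _ (x - y : K).2
    have h2 := (hTa x g ⟨_, hz⟩ 0).2
    rw [hxy', (hTa y g ⟨_, hz⟩ 0).2] at h2
    have h3 : g.1 ((g⁻¹).1 ((x - y : K) : V)) = ((x - y : K) : V) := g.1.apply_symm_apply _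
    simp only [h3] at h2
    have h4 : p⁻¹ * ⟪((x - y : K) : V), ((x - y : K) : V)⟫ = 0 := by
      conv_lhs => rw [Submodule.coe_sub, inner_sub_left, ← Submodule.coe_sub]
      linear_combination h2
    have h5 := (mul_eq_zero.mp h4).resolve_left (inv_ne_zero p_ne)
    rw [inner_self_eq_zero] at h5
    have h6 : x = y := sub_eq_zero.mp (Subtype.ext h5)
    rw [h6]
  · rintro ⟨e, he⟩
    obtain ⟨x, g, h⟩ := hsurj e he
    exact ⟨(x, g), Subtype.ext h⟩
  · intro x y g h
    exact Subtype.ext (hTmul x y g h)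
  · intro x g y n
    exact hTa x g y n
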